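/- Let n ≥ 2, let X be B or C, let A be the Cartan matrix of type X_n and ι an admissible sequence adapted to A. Let T = [j_1,…,j_k]^X_s ∈ Tab_{X,ι} and t ∈ [1,n−1], and suppose there exists i ∈ [1,k] with j_i = t and j_{i+1} ≠ t+1. Set M' := s+k−i+P(t). Then M' ≥ 1 and: (1) the coefficient of x_{M',t} in T is 0, 1 or 2; (2) this coefficient is 0 if and only if j_{i+n−t+1} = ovl(t) and j_{i+n−t} ≠ ovl(t+1); (3) this coefficient is 2 if and only if j_{i+n−t+1} ≠ ovl(t) and j_{i+n−t} = ovl(t+1); and (4) if this coefficient is 1, then S_{M',t}T equals the tableau obtained from T by replacing the entry j_i = t by t+1. -/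

import Mathlib

noncomputable section

/-- The coordinate linear form `x_k` (as a coefficient vector). -/
def xc (k : ℕ) : ℕ → ℚ := fun l => if l = k then 1 else 0

/-- Cartan matrix of type `A_n`. -/
def cartanA (_n : ℕ) (i j : ℕ) : ℤ :=
  if i = j then 2 else if i + 1 = j ∨ j + 1 = i then -1 else 0

/-- Cartan matrix of type `B_n`. -/
def cartanB (n : ℕ) (i j : ℕ) : ℤ :=
  if i = j then 2
  else if i = n ∧ j = n - 1 then -2
  else if i + 1 = j ∨ j + 1 = i then -1 else 0

/-- Cartan matrix of type `C_n`. -/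
def cartanC (n : ℕ) (i j : ℕ) : ℤ :=
  if i = j then 2
  else if i = n - 1 ∧ j = n then -2
  else if i + 1 = j ∨ j + 1 = i then -1 else 0

/-- Cartan matrix of type `D_n`. -/
def cartanD (n : ℕ) (i j : ℕ) : ℤ :=
  if i = j then 2
  else if (i = n - 1 ∧ j = n) ∨ (i = n ∧ j = n - 1) then 0
  else if (i + 1 = j ∨ j + 1 = i) ∨ (i = n ∧ j = n - 2) ∨ (i = n - 2 ∧ j = n) then -1
  else 0

/-- `ι` (with positions indexed by `k ≥ 1`) takes values in `{1,…,n}`, has no two equal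
consecutive entries, and every index occurs infinitely often. -/
def Admissible (n : ℕ) (ι : ℕ → ℕ) : Prop :=
  (∀ k, 1 ≤ k → 1 ≤ ι k ∧ ι k ≤ n) ∧
  (∀ k, 1 ≤ k → ι k ≠ ι (k + 1)) ∧
  (∀ i, 1 ≤ i → i ≤ n → ∀ N, ∃ k, N ≤ k ∧ ι k = i)

/-- `k^+`: the next position after `k` carrying the same letter. -/
def kplus (ι : ℕ → ℕ) (k : ℕ) : ℕ := sInf {l | k < l ∧ ι l = ι k}

/-- `k^-`: the previous position (`≥ 1`) carrying the same letter, `0` if none. -/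
def kminus (ι : ℕ → ℕ) (k : ℕ) : ℕ := sSup {l | 0 < l ∧ l < k ∧ ι l = ι k}

/-- The linear form `β_k` (with `β_0 = 0`). -/
def beta (A : ℕ → ℕ → ℤ) (ι : ℕ → ℕ) (k : ℕ) : ℕ → ℚ :=
  if k = 0 then 0
  else xc k + (∑ j ∈ Finset.Ioo k (kplus ι k), (A (ι k) (ι j) : ℚ) • xc j) + xc (kplus ι k)

/-- The piecewise-linear operator `S_k`. -/
def Sop (A : ℕ → ℕ → ℤ) (ι : ℕ → ℕ) (k : ℕ) (φ : ℕ → ℚ) : ℕ → ℚ :=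
  if 0 < φ k then φ - φ k • beta A ι k
  else φ - φ k • beta A ι (kminus ι k)

/-- Membership in `Ξ_ι`: forms obtained from some `x_{j_0}` by finitely many operators `S_k`. -/
inductive XiMem (A : ℕ → ℕ → ℤ) (ι : ℕ → ℕ) : (ℕ → ℚ) → Prop
  | base (k : ℕ) (hk : 1 ≤ k) : XiMem A ι (xc k)
  | step (k : ℕ) (hk : 1 ≤ k) (φ : ℕ → ℚ) (h : XiMem A ι φ) : XiMem A ι (Sop A ι k φ)

/-- The set `Ξ_ι`. -/
def Xi (A : ℕ → ℕ → ℤ) (ι : ℕ → ℕ) : Set (ℕ → ℚ) := { φ | XiMem A ι φ }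

/-- Forms obtained from a set `g` of generators by finitely many operators `S_k`. -/
inductive XiMemFrom (A : ℕ → ℕ → ℤ) (ι : ℕ → ℕ) (g : Set (ℕ → ℚ)) : (ℕ → ℚ) → Prop
  | base (φ : ℕ → ℚ) (h : φ ∈ g) : XiMemFrom A ι g φ
  | step (k : ℕ) (hk : 1 ≤ k) (φ : ℕ → ℚ) (h : XiMemFrom A ι g φ) :
      XiMemFrom A ι g (Sop A ι k φ)

/-- `ι` is adapted to the Cartan matrix `A`: for `i ≠ j` with `a_{i,j} ≠ 0`, consecutive
members of the subsequence of `ι` consisting of the letters `i`, `j` are distinct. -/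
def Adapted (n : ℕ) (A : ℕ → ℕ → ℤ) (ι : ℕ → ℕ) : Prop :=
  ∀ i j, 1 ≤ i → i ≤ n → 1 ≤ j → j ≤ n → i ≠ j → A i j ≠ 0 →
    ∀ k l, 1 ≤ k → k < l → (ι k = i ∨ ι k = j) → (ι l = i ∨ ι l = j) →
      (∀ m, k < m → m < l → ι m ≠ i ∧ ι m ≠ j) → ι k ≠ ι l

/-- Position of the first occurrence of the letter `i` in `ι`. -/
def firstOcc (ι : ℕ → ℕ) (i : ℕ) : ℕ := sInf {k | 1 ≤ k ∧ ι k = i}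

/-- `p_{i,j} = 1` iff the first occurrence of `i` precedes the first occurrence of `j`. -/
def pval (ι : ℕ → ℕ) (i j : ℕ) : ℕ := if firstOcc ι i < firstOcc ι j then 1 else 0

/-- The function `P(k)` for types A, B, C (and `P(k) = 0` for `k > n`, `k ≤ 1`). -/
def PABC (ι : ℕ → ℕ) (n k : ℕ) : ℕ :=
  if k ≤ n then ∑ t ∈ Finset.Icc 2 k, pval ι t (t - 1) else 0

/-- The function `P(k)` for type D. -/
def PD (ι : ℕ → ℕ) (n k : ℕ) : ℕ :=
  if k = n then (∑ t ∈ Finset.Icc 2 (n - 2), pval ι t (t - 1)) + pval ι n (n - 2)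
  else if k ≤ n then ∑ t ∈ Finset.Icc 2 k, pval ι t (t - 1) else 0

/-- `occPos ι j s`: the position of the `s`-th occurrence of the letter `j` in `ι`
(`0` for `s = 0`). -/
def occPos (ι : ℕ → ℕ) (j : ℕ) : ℕ → ℕ
  | 0 => 0
  | s + 1 => sInf {k | occPos ι j s < k ∧ ι k = j}

/-- The double-indexed coordinate form `x_{s,j}`, with the conventions
`x_{s,0} = x_{s,n+1} = 0` and `x_{s,j} = 0` for `s ≤ 0`. -/
def xsj (ι : ℕ → ℕ) (n : ℕ) (s : ℤ) (j : ℕ) : ℕ → ℚ :=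
  if 1 ≤ s ∧ 1 ≤ j ∧ j ≤ n then xc (occPos ι j s.toNat) else 0

/-- The double-indexed form `β_{s,j}`. -/
def betasj (A : ℕ → ℕ → ℤ) (ι : ℕ → ℕ) (s : ℤ) (j : ℕ) : ℕ → ℚ :=
  beta A ι (occPos ι j s.toNat)

/-- The double-indexed operator `S_{m,j}`. -/
def Ssj (A : ℕ → ℕ → ℤ) (ι : ℕ → ℕ) (m j : ℕ) (φ : ℕ → ℚ) : ℕ → ℚ :=
  Sop A ι (occPos ι j m) φ

/- Entries of the ordered sets `J_X` are encoded as natural numbers: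
an unbarred entry `j ∈ {1,…,n}` is encoded as `j`, a barred entry `j̄` is
encoded as `2n+1-j` (so that `n̄ = n+1, …, 1̄ = 2n` and the total order of
`J_B = J_C` is the numerical order), and the extra symbol `ovl(n+1)` of
types C and D is encoded as `0`. -/

/-- The box of type A. -/
def boxA (ι : ℕ → ℕ) (n : ℕ) (s : ℤ) (j : ℕ) : ℕ → ℚ :=
  xsj ι n (s + (PABC ι n j : ℤ)) j - xsj ι n (s + (PABC ι n (j - 1) : ℤ) + 1) (j - 1)

/-- The box of type B. -/
def boxB (ι : ℕ → ℕ) (n : ℕ) (s : ℤ) (e : ℕ) : ℕ → ℚ :=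
  if e ≤ n then
    xsj ι n (s + (PABC ι n e : ℤ)) e - xsj ι n (s + (PABC ι n (e - 1) : ℤ) + 1) (e - 1)
  else
    xsj ι n (s + (PABC ι n (2 * n - e) : ℤ) + (n : ℤ) - ((2 * n + 1 - e : ℕ) : ℤ) + 1)
        (2 * n - e)
      - xsj ι n (s + (PABC ι n (2 * n + 1 - e) : ℤ) + (n : ℤ) - ((2 * n + 1 - e : ℕ) : ℤ) + 1)
          (2 * n + 1 - e)

/-- The box of type C (`ovl(n+1)` encoded as `0`). -/
def boxC (ι : ℕ → ℕ) (n : ℕ) (s : ℤ) (e : ℕ) : ℕ → ℚ :=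
  if e = 0 then xsj ι n (s + (PABC ι n n : ℤ)) n
  else if e < n then
    xsj ι n (s + (PABC ι n e : ℤ)) e - xsj ι n (s + (PABC ι n (e - 1) : ℤ) + 1) (e - 1)
  else if e = n then
    (2 : ℚ) • xsj ι n (s + (PABC ι n n : ℤ)) n
      - xsj ι n (s + (PABC ι n (n - 1) : ℤ) + 1) (n - 1)
  else if e = n + 1 then
    xsj ι n (s + (PABC ι n (n - 1) : ℤ) + 1) (n - 1)
      - (2 : ℚ) • xsj ι n (s + (PABC ι n n : ℤ) + 1) n
  else
    xsj ι n (s + (PABC ι n (2 * n - e) : ℤ) + (n : ℤ) - ((2 * n + 1 - e : ℕ) : ℤ) + 1)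
        (2 * n - e)
      - xsj ι n (s + (PABC ι n (2 * n + 1 - e) : ℤ) + (n : ℤ) - ((2 * n + 1 - e : ℕ) : ℤ) + 1)
          (2 * n + 1 - e)

/-- The box of type D (`ovl(n+1)` encoded as `0`, `n̄` as `n+1`, `ovl(n-1)` as `n+2`). -/
def boxD (ι : ℕ → ℕ) (n : ℕ) (s : ℤ) (e : ℕ) : ℕ → ℚ :=
  if e = 0 then xsj ι n (s + (PD ι n n : ℤ)) n
  else if e ≤ n - 2 then
    xsj ι n (s + (PD ι n e : ℤ)) e - xsj ι n (s + (PD ι n (e - 1) : ℤ) + 1) (e - 1)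
  else if e = n - 1 then
    xsj ι n (s + (PD ι n (n - 1) : ℤ)) (n - 1) + xsj ι n (s + (PD ι n n : ℤ)) n
      - xsj ι n (s + (PD ι n (n - 2) : ℤ) + 1) (n - 2)
  else if e = n then
    xsj ι n (s + (PD ι n n : ℤ)) n - xsj ι n (s + (PD ι n (n - 1) : ℤ) + 1) (n - 1)
  else if e = n + 1 then
    xsj ι n (s + (PD ι n (n - 1) : ℤ)) (n - 1) - xsj ι n (s + (PD ι n n : ℤ) + 1) n
  else if e = n + 2 then
    xsj ι n (s + (PD ι n (n - 2) : ℤ) + 1) (n - 2)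
      - xsj ι n (s + (PD ι n (n - 1) : ℤ) + 1) (n - 1)
      - xsj ι n (s + (PD ι n n : ℤ) + 1) n
  else
    xsj ι n (s + (PD ι n (2 * n - e) : ℤ) + (n : ℤ) - ((2 * n + 1 - e : ℕ) : ℤ)) (2 * n - e)
      - xsj ι n (s + (PD ι n (2 * n + 1 - e) : ℤ) + (n : ℤ) - ((2 * n + 1 - e : ℕ) : ℤ))
          (2 * n + 1 - e)

/-- The column tableau `[j_1,…,j_k]_s = Σ_{i=1}^k box_{s+k-i}(j_i)`. -/
def tab (box : ℤ → ℕ → ℕ → ℚ) (s : ℤ) (k : ℕ) (j : ℕ → ℕ) : ℕ → ℚ :=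
  ∑ i ∈ Finset.Icc 1 k, box (s + (k : ℤ) - (i : ℤ)) (j i)

/-- The set `Tab_{A,ι}`. -/
def TabA (ι : ℕ → ℕ) (n : ℕ) : Set (ℕ → ℚ) :=
  { T | ∃ (k : ℕ) (s : ℤ) (j : ℕ → ℕ),
      1 ≤ k ∧ k ≤ n ∧
      (∀ i, 1 ≤ i → i ≤ k → 1 ≤ j i ∧ j i ≤ n + 1) ∧
      (∀ i, 1 ≤ i → i < k → j i < j (i + 1)) ∧
      1 - (PABC ι n k : ℤ) ≤ s ∧
      T = tab (boxA ι n) s k j }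

/-- `|·|` on encoded entries of `J_B = J_C`. -/
def absJ (n e : ℕ) : ℕ := if e ≤ n then e else 2 * n + 1 - e

/-- The set `Tab_{B,ι}`. -/
def TabB (ι : ℕ → ℕ) (n : ℕ) : Set (ℕ → ℚ) :=
  { T | ∃ (k : ℕ) (s : ℤ) (j : ℕ → ℕ),
      1 ≤ k ∧ k ≤ n ∧
      (∀ i, 1 ≤ i → i ≤ k → 1 ≤ j i ∧ j i ≤ 2 * n) ∧
      (∀ i, 1 ≤ i → i < k → j i < j (i + 1)) ∧
      (k = n → ∀ l m, 1 ≤ l → l < m → m ≤ k → absJ n (j l) ≠ absJ n (j m)) ∧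
      1 - (PABC ι n k : ℤ) ≤ s ∧
      T = tab (boxB ι n) s k j }

/-- Defining conditions of `Tab_{C,ι}` on the data `(k,s,j)`. -/
def TabCcond (ι : ℕ → ℕ) (n : ℕ) (k : ℕ) (s : ℤ) (j : ℕ → ℕ) : Prop :=
  (1 ≤ k ∧ k ≤ n - 1 ∧
    (∀ i, 1 ≤ i → i ≤ k → 1 ≤ j i ∧ j i ≤ 2 * n) ∧
    (∀ i, 1 ≤ i → i < k → j i < j (i + 1)) ∧
    1 - (PABC ι n k : ℤ) ≤ s)
  ∨
  (j 1 = 0 ∧ 1 ≤ k ∧ k ≤ n + 1 ∧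
    (∀ i, 2 ≤ i → i ≤ k → n + 1 ≤ j i ∧ j i ≤ 2 * n) ∧
    (∀ i, 2 ≤ i → i < k → j i < j (i + 1)) ∧
    1 - (PABC ι n n : ℤ) ≤ s)

/-- The set `Tab_{C,ι}`. -/
def TabC (ι : ℕ → ℕ) (n : ℕ) : Set (ℕ → ℚ) :=
  { T | ∃ k s j, TabCcond ι n k s j ∧ T = tab (boxC ι n) s k j }

/-- The partial order on (encoded) `J_D`: `a ≤ b` iff `a = b`, or `a < b` numerically and
`(a,b)` is not the incomparable pair `(n, n̄)`. -/
def leD (n a b : ℕ) : Prop := a = b ∨ (a < b ∧ ¬(a = n ∧ b = n + 1))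

/-- Defining conditions of `Tab_{D,ι}` on the data `(k,s,j)`. -/
def TabDcond (ι : ℕ → ℕ) (n : ℕ) (k : ℕ) (s : ℤ) (j : ℕ → ℕ) : Prop :=
  (1 ≤ k ∧ k ≤ n - 2 ∧
    (∀ i, 1 ≤ i → i ≤ k → 1 ≤ j i ∧ j i ≤ 2 * n) ∧
    (∀ i, 1 ≤ i → i < k → ¬ leD n (j (i + 1)) (j i)) ∧
    1 - (PD ι n k : ℤ) ≤ s)
  ∨
  (j 1 = 0 ∧ 1 ≤ k ∧ k ≤ n + 1 ∧
    (∀ i, 2 ≤ i → i ≤ k → n + 1 ≤ j i ∧ j i ≤ 2 * n) ∧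
    (∀ i, 2 ≤ i → i < k → j i < j (i + 1)) ∧
    (k % 2 = 0 → 1 - (PD ι n (n - 1) : ℤ) ≤ s) ∧
    (k % 2 = 1 → 1 - (PD ι n n : ℤ) ≤ s))

/-- The set `Tab_{D,ι}`. -/
def TabD (ι : ℕ → ℕ) (n : ℕ) : Set (ℕ → ℚ) :=
  { T | ∃ k s j, TabDcond ι n k s j ∧ T = tab (boxD ι n) s k j }

end

theorem occ_succ (n : ℕ) (ι : ℕ → ℕ) (hadm : Admissible n ι) (j : ℕ) (h1 : 1 ≤ j) (h2 : j ≤ n)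
    (m : ℕ) : occPos ι j m < occPos ι j (m + 1) ∧ ι (occPos ι j (m + 1)) = j := by
  obtain ⟨l, hl, hl'⟩ := hadm.2.2 j h1 h2 (occPos ι j m + 1)
  have := Nat.sInf_mem (s := {k | occPos ι j m < k ∧ ι k = j}) ⟨l, hl, hl'⟩
  exact this

theorem occ_le (ι : ℕ → ℕ) (j m l : ℕ) (h : occPos ι j m < l) (hl : ι l = j) :
    occPos ι j (m + 1) ≤ l := Nat.sInf_le (s := {k | occPos ι j m < k ∧ ι k = j}) ⟨h, hl⟩

theorem occ_mono (n : ℕ) (ι : ℕ → ℕ) (hadm : Admissible n ι) (j : ℕ) (h1 : 1 ≤ j) (h2 : j ≤ n) :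
    StrictMono (occPos ι j) :=
  strictMono_nat_of_lt_succ fun m => (occ_succ n ι hadm j h1 h2 m).1

theorem occ_letter (n : ℕ) (ι : ℕ → ℕ) (hadm : Admissible n ι) (j : ℕ) (h1 : 1 ≤ j) (h2 : j ≤ n)
    (m : ℕ) (hm : 1 ≤ m) : ι (occPos ι j m) = j := by
  obtain ⟨m, rfl⟩ : ∃ q, m = q + 1 := ⟨m - 1, by omega⟩
  exact (occ_succ n ι hadm j h1 h2 m).2

theorem occ_pos (n : ℕ) (ι : ℕ → ℕ) (hadm : Admissible n ι) (j : ℕ) (h1 : 1 ≤ j) (h2 : j ≤ n)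
    (m : ℕ) (hm : 1 ≤ m) : 1 ≤ occPos ι j m := by
  obtain ⟨m, rfl⟩ : ∃ q, m = q + 1 := ⟨m - 1, by omega⟩
  have := (occ_succ n ι hadm j h1 h2 m).1
  omega

theorem occ_eq_iff (n : ℕ) (ι : ℕ → ℕ) (hadm : Admissible n ι) (j : ℕ) (h1 : 1 ≤ j) (h2 : j ≤ n)
    (t : ℕ) (h3 : 1 ≤ t) (h4 : t ≤ n) (m q : ℕ) (hm : 1 ≤ m) (hq : 1 ≤ q) :
    occPos ι t m = occPos ι j q ↔ j = t ∧ q = m := by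
  constructor
  · intro h
    have e : j = t := by
      rw [← occ_letter n ι hadm j h1 h2 q hq, ← h, occ_letter n ι hadm t h3 h4 m hm]
    subst e
    exact ⟨rfl, ((occ_mono n ι hadm j h1 h2).injective h).symm⟩
  · rintro ⟨rfl, rfl⟩; rfl

theorem xsj_eval (n : ℕ) (ι : ℕ → ℕ) (hadm : Admissible n ι) (s : ℤ) (u t : ℕ)
    (h3 : 1 ≤ t) (h4 : t ≤ n) (M : ℤ) (hM : 1 ≤ M) :
    xsj ι n s u (occPos ι t M.toNat) = if u = t ∧ s = M then 1 else 0 := by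
  unfold xsj
  by_cases h : 1 ≤ s ∧ 1 ≤ u ∧ u ≤ n
  · rw [if_pos h]
    unfold xc
    have := occ_eq_iff n ι hadm u h.2.1 h.2.2 t h3 h4 M.toNat s.toNat (by omega) (by omega)
    simp only [this]
    congr 1
    apply propext
    constructor
    · rintro ⟨a, b⟩; exact ⟨a, by omega⟩
    · rintro ⟨a, b⟩; exact ⟨a, by omega⟩
  · rw [if_neg h, if_neg (by rintro ⟨rfl, rfl⟩; omega)]
    rfl

theorem kplus_occ (n : ℕ) (ι : ℕ → ℕ) (hadm : Admissible n ι) (j : ℕ) (h1 : 1 ≤ j) (h2 : j ≤ n)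
    (m : ℕ) (hm : 1 ≤ m) : kplus ι (occPos ι j m) = occPos ι j (m + 1) := by
  unfold kplus
  rw [occ_letter n ι hadm j h1 h2 m hm]
  rfl

/-- The alternation property for two letters. -/
def AltPair (ι : ℕ → ℕ) (i j : ℕ) : Prop :=
    ∀ k l, 1 ≤ k → k < l → (ι k = i ∨ ι k = j) → (ι l = i ∨ ι l = j) →
      (∀ m, k < m → m < l → ι m ≠ i ∧ ι m ≠ j) → ι k ≠ ι l

theorem AltPair.symm' {ι : ℕ → ℕ} {i j : ℕ} (h : AltPair ι i j) : AltPair ι j i := by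
  intro k l h1 h2 h3 h4 h5
  exact h k l h1 h2 h3.symm h4.symm fun m a b => (h5 m a b).symm

theorem alt_between (n : ℕ) (ι : ℕ → ℕ) (hadm : Admissible n ι) (u v : ℕ) (h1 : 1 ≤ u) (h2 : u ≤ n)
    (hA : AltPair ι u v) (m : ℕ) (hm : 1 ≤ m) :
    ∃ l, occPos ι u m < l ∧ l < occPos ι u (m + 1) ∧ ι l = v := by
  by_contra! hc
  refine hA (occPos ι u m) (occPos ι u (m + 1)) (occ_pos n ι hadm u h1 h2 m hm)
    (occ_succ n ι hadm u h1 h2 m).1 (Or.inl (occ_letter n ι hadm u h1 h2 m hm))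
    (Or.inl (occ_succ n ι hadm u h1 h2 m).2) ?_ ?_
  · intro l hl hl'
    refine ⟨fun e => ?_, hc l hl hl'⟩
    have := occ_le ι u m l hl e
    omega
  · rw [occ_letter n ι hadm u h1 h2 m hm, (occ_succ n ι hadm u h1 h2 m).2]

theorem interlace (n : ℕ) (ι : ℕ → ℕ) (hadm : Admissible n ι) (u v : ℕ) (h1 : 1 ≤ u) (h2 : u ≤ n)
    (h3 : 1 ≤ v) (h4 : v ≤ n) (hA : AltPair ι u v) (hf : occPos ι u 1 < occPos ι v 1) (m : ℕ) :
    occPos ι v m < occPos ι u (m + 1) ∧ occPos ι u (m + 1) < occPos ι v (m + 1) := by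
  induction m with
  | zero =>
    refine ⟨?_, hf⟩
    exact occ_pos n ι hadm u h1 h2 1 le_rfl
  | succ m ih =>
    obtain ⟨l, a, b, c⟩ := alt_between n ι hadm u v h1 h2 hA (m + 1) (by omega)
    have a1 := occ_le ι v m l (by omega) c
    obtain ⟨l', a', b', c'⟩ := alt_between n ι hadm v u h3 h4 hA.symm' (m + 1) (by omega)
    have a2 := occ_le ι u (m + 1) l' (by omega) c'
    omega

theorem between_iff (n : ℕ) (ι : ℕ → ℕ) (hadm : Admissible n ι) (u v : ℕ) (h1 : 1 ≤ u) (h2 : u ≤ n)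
    (h3 : 1 ≤ v) (h4 : v ≤ n) (huv : u ≠ v) (hA : AltPair ι u v) (m : ℕ) (hm : 1 ≤ m) (l : ℕ) :
    (l ∈ Finset.Ioo (occPos ι u m) (occPos ι u (m + 1)) ∧ ι l = v) ↔
      l = occPos ι v (m + pval ι v u) := by
  obtain ⟨m, rfl⟩ : ∃ q, m = q + 1 := ⟨m - 1, by omega⟩
  have hne : occPos ι u 1 ≠ occPos ι v 1 := by
    intro e
    have := (occ_eq_iff n ι hadm v h3 h4 u h1 h2 1 1 le_rfl le_rfl).1 e
    exact huv this.1.symm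
  have hp : pval ι v u = if occPos ι v 1 < occPos ι u 1 then 1 else 0 := rfl
  have key : ∀ q, 
      occPos ι v q < occPos ι u (m + 1) → occPos ι u (m + 1) < occPos ι v (q + 1) →
      occPos ι v (q + 1) < occPos ι u (m + 1 + 1) → occPos ι u (m + 1 + 1) < occPos ι v (q + 1 + 1) →
      ((l ∈ Finset.Ioo (occPos ι u (m + 1)) (occPos ι u (m + 1 + 1)) ∧ ι l = v) ↔
      l = occPos ι v (q + 1)) := by
    intro q b1 b2 b3 b4
    rw [Finset.mem_Ioo]
    constructor
    · rintro ⟨⟨c1, c2⟩, c3⟩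
      have d1 := occ_le ι v q l (by omega) c3
      by_contra hne
      have d2 := occ_le ι v (q + 1) l (by omega) c3
      omega
    · rintro rfl
      exact ⟨⟨b2, b3⟩, (occ_succ n ι hadm v h3 h4 q).2⟩
  rcases lt_or_gt_of_ne hne with h | h
  · rw [hp, if_neg (by omega)]
    have i1 := interlace n ι hadm u v h1 h2 h3 h4 hA h m
    have i2 := interlace n ι hadm u v h1 h2 h3 h4 hA h (m + 1)
    exact key m i1.1 i1.2 i2.1 i2.2
  · rw [hp, if_pos (by omega)]
    have i1 := interlace n ι hadm v u h3 h4 h1 h2 hA.symm' h m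
    have i2 := interlace n ι hadm v u h3 h4 h1 h2 hA.symm' h (m + 1)
    have i3 := interlace n ι hadm v u h3 h4 h1 h2 hA.symm' h (m + 1 + 1)
    exact key (m + 1) i1.2 i2.1 i2.2 i3.1

theorem pval_add (n : ℕ) (ι : ℕ → ℕ) (hadm : Admissible n ι) (u v : ℕ) (h1 : 1 ≤ u) (h2 : u ≤ n)
    (h3 : 1 ≤ v) (h4 : v ≤ n) (huv : u ≠ v) : pval ι u v + pval ι v u = 1 := by
  have hne : occPos ι u 1 ≠ occPos ι v 1 := by
    intro e
    have := (occ_eq_iff n ι hadm v h3 h4 u h1 h2 1 1 le_rfl le_rfl).1 e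
    exact huv this.1.symm
  have hp : pval ι v u = if occPos ι v 1 < occPos ι u 1 then 1 else 0 := rfl
  have hp' : pval ι u v = if occPos ι u 1 < occPos ι v 1 then 1 else 0 := rfl
  rw [hp, hp']
  split_ifs <;> omega

theorem PABC_succ (n : ℕ) (ι : ℕ → ℕ) (t : ℕ) (h1 : 1 ≤ t) (h2 : t + 1 ≤ n) :
    PABC ι n (t + 1) = PABC ι n t + pval ι (t + 1) t := by
  unfold PABC
  rw [if_pos h2, if_pos (by omega), Finset.sum_Icc_succ_top (by omega)]
  simp

theorem PABC_diff (n : ℕ) (ι : ℕ → ℕ) (i : ℕ) (h1 : 1 ≤ i) (d : ℕ) (h2 : i + d ≤ n) :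
    PABC ι n i ≤ PABC ι n (i + d) ∧ PABC ι n (i + d) ≤ PABC ι n i + d := by
  induction d with
  | zero => simp
  | succ d ih =>
    have := ih (by omega)
    have e := PABC_succ n ι (i + d) (by omega) (by omega)
    have hp : pval ι (i + d + 1) (i + d) ≤ 1 := by unfold pval; split_ifs <;> omega
    rw [show i + (d + 1) = i + d + 1 by omega, e]
    omega

theorem beta_occ (n : ℕ) (ι : ℕ → ℕ) (hadm : Admissible n ι) (A : ℕ → ℕ → ℤ) (t : ℕ)
    (h1 : 1 ≤ t) (h2 : t + 1 ≤ n)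
    (hA0 : ∀ v, v ≠ t → v ≠ t + 1 → v + 1 ≠ t → A t v = 0)
    (hup : AltPair ι t (t + 1)) (hdn : 2 ≤ t → AltPair ι t (t - 1) ∧ A t (t - 1) = -1)
    (σ : ℤ) (hM : 1 ≤ σ + (PABC ι n t : ℤ)) :
    beta A ι (occPos ι t (σ + (PABC ι n t : ℤ)).toNat) =
      xsj ι n (σ + (PABC ι n t : ℤ)) t + xsj ι n (σ + (PABC ι n t : ℤ) + 1) t
      + (A t (t + 1) : ℚ) • xsj ι n (σ + (PABC ι n (t + 1) : ℤ)) (t + 1)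
      - xsj ι n (σ + (PABC ι n (t - 1) : ℤ) + 1) (t - 1) := by
  have hPs := PABC_succ n ι t h1 h2
  obtain ⟨m, hm⟩ : ∃ m : ℕ, σ + (PABC ι n t : ℤ) = m := ⟨_, (Int.toNat_of_nonneg (by omega)).symm⟩
  have hm1 : 1 ≤ m := by omega
  have e1 : σ + (PABC ι n (t + 1) : ℤ) = ((m + pval ι (t + 1) t : ℕ) : ℤ) := by
    rw [hPs]; push_cast; omega
  rw [hm, e1]
  have hpos := occ_pos n ι hadm t h1 (by omega) m hm1
  unfold beta
  rw [Int.toNat_natCast, if_neg (by omega), kplus_occ n ι hadm t h1 (by omega) m hm1,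
    occ_letter n ι hadm t h1 (by omega) m hm1]
  have x1 : xsj ι n (m : ℤ) t = xc (occPos ι t m) := by
    unfold xsj; rw [if_pos (by omega)]; simp
  have x2 : xsj ι n ((m : ℤ) + 1) t = xc (occPos ι t (m + 1)) := by
    unfold xsj; rw [if_pos (by omega)]; congr 1
  have x3 : xsj ι n ((m + pval ι (t + 1) t : ℕ) : ℤ) (t + 1)
      = xc (occPos ι (t + 1) (m + pval ι (t + 1) t)) := by
    unfold xsj; rw [if_pos (by omega), Int.toNat_natCast]
  rw [x1, x2, x3]
  have main : (∑ j ∈ Finset.Ioo (occPos ι t m) (occPos ι t (m + 1)), (A t (ι j) : ℚ) • xc j) =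
      (A t (t + 1) : ℚ) • xc (occPos ι (t + 1) (m + pval ι (t + 1) t))
      - xsj ι n (σ + (PABC ι n (t - 1) : ℤ) + 1) (t - 1) := by
    funext l
    have hs : (∑ j ∈ Finset.Ioo (occPos ι t m) (occPos ι t (m + 1)), (A t (ι j) : ℚ) • xc j) l =
        if l ∈ Finset.Ioo (occPos ι t m) (occPos ι t (m + 1)) then (A t (ι l) : ℚ) else 0 := by
      rw [Finset.sum_apply]
      simp only [Pi.smul_apply, xc, smul_eq_mul, mul_ite, mul_one, mul_zero]
      rw [Finset.sum_ite_eq]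
    have b1 := between_iff n ι hadm t (t + 1) h1 (by omega) (by omega) h2 (by omega) hup m hm1 l
    have hnt : l ∈ Finset.Ioo (occPos ι t m) (occPos ι t (m + 1)) → ι l ≠ t := by
      intro hl e
      rw [Finset.mem_Ioo] at hl
      have := occ_le ι t m l hl.1 e
      omega
    have hx : xsj ι n (σ + (PABC ι n (t - 1) : ℤ) + 1) (t - 1) l =
        if l ∈ Finset.Ioo (occPos ι t m) (occPos ι t (m + 1)) ∧ ι l + 1 = t then 1 else 0 := by
      by_cases h : 2 ≤ t
      · have b2 := between_iff n ι hadm t (t - 1) h1 (by omega) (by omega) (by omega) (by omega)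
          (hdn h).1 m hm1 l
        have hp := pval_add n ι hadm t (t - 1) h1 (by omega) (by omega) (by omega) (by omega)
        have hPt := PABC_succ n ι (t - 1) (by omega) (by omega)
        rw [show t - 1 + 1 = t by omega] at hPt
        rw [show σ + (PABC ι n (t - 1) : ℤ) + 1 = ((m + pval ι (t - 1) t : ℕ) : ℤ) by
          push_cast; omega]
        unfold xsj
        rw [if_pos (by omega), Int.toNat_natCast]
        unfold xc
        simp only [← b2]
        congr 1
        apply propext
        constructor <;> rintro ⟨a, b⟩ <;> exact ⟨a, by omega⟩
      · have : t = 1 := by omega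
        subst this
        unfold xsj
        rw [if_neg (by omega)]
        symm
        apply if_neg
        rintro ⟨a, b⟩
        rw [Finset.mem_Ioo] at a
        have := hadm.1 l (by omega)
        omega
    rw [Pi.sub_apply, hs, hx, Pi.smul_apply]
    unfold xc
    simp only [← b1]
    by_cases hl : l ∈ Finset.Ioo (occPos ι t m) (occPos ι t (m + 1))
    · have h0 := hnt hl
      simp only [hl, true_and, if_true]
      by_cases c1 : ι l = t + 1
      · rw [c1, if_pos rfl, if_neg (by omega)]; simp
      · by_cases c2 : ι l + 1 = t
        · have hpos := hadm.1 l (by rw [Finset.mem_Ioo] at hl; omega)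
          rw [show ι l = t - 1 by omega, (hdn (by omega)).2, if_neg (by omega), if_pos (by omega)]
          simp
        · rw [hA0 _ h0 c1 c2, if_neg c1, if_neg c2]; simp
    · simp [hl]
  rw [main]
  abel

theorem sum_ind (k a : ℕ) (ha : 1 ≤ a) (p : ℕ → Prop) [DecidablePred p] :
    (∑ l ∈ Finset.Icc 1 k, if p l ∧ l = a then (1 : ℚ) else 0) =
      if a ≤ k ∧ p a then 1 else 0 := by
  have : ∀ l, (if p l ∧ l = a then (1 : ℚ) else 0) = if l = a then (if p a then 1 else 0) else 0 := by
    intro l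
    by_cases h : l = a
    · subst h; simp
    · simp [h]
  simp only [this]
  rw [Finset.sum_ite_eq']
  by_cases h : a ≤ k <;> simp [h, ha]

theorem tab_update (box : ℤ → ℕ → ℕ → ℚ) (s : ℤ) (k : ℕ) (jf : ℕ → ℕ) (i e : ℕ) (h1 : 1 ≤ i)
    (h2 : i ≤ k) : tab box s k (Function.update jf i e) =
      tab box s k jf + (box (s + k - i) e - box (s + k - i) (jf i)) := by
  have : tab box s k (Function.update jf i e) - tab box s k jf =
      box (s + k - i) e - box (s + k - i) (jf i) := by
    unfold tab
    rw [← Finset.sum_sub_distrib, Finset.sum_eq_single i]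
    · simp
    · intro b _ hb
      rw [Function.update_of_ne hb, sub_self]
    · intro h
      exact absurd (Finset.mem_Icc.2 ⟨h1, h2⟩) h
  rw [← this]; abel

theorem le_entry (jf : ℕ → ℕ) (k : ℕ) (hpos : ∀ i, 1 ≤ i → i ≤ k → 1 ≤ jf i)
    (hinc : ∀ i, 1 ≤ i → i < k → jf i < jf (i + 1)) (i : ℕ) (h1 : 1 ≤ i) (h2 : i ≤ k) :
    i ≤ jf i := by
  induction i, h1 using Nat.le_induction with
  | base => exact hpos 1 le_rfl h2
  | succ i hi ih =>
    have := ih (by omega)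
    have := hinc i hi (by omega)
    omega

theorem core (n : ℕ) (ι : ℕ → ℕ) (hadm : Admissible n ι)
    (A : ℕ → ℕ → ℤ) (box : ℤ → ℕ → ℕ → ℚ)
    (k : ℕ) (s : ℤ) (jf : ℕ → ℕ) (hkn : k ≤ n)
    (hr : ∀ i, 1 ≤ i → i ≤ k → 1 ≤ jf i ∧ jf i ≤ 2 * n)
    (hinc : ∀ i, 1 ≤ i → i < k → jf i < jf (i + 1))
    (hs : 1 - (PABC ι n k : ℤ) ≤ s)
    (t : ℕ) (ht1 : 1 ≤ t) (ht2 : t + 1 ≤ n)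
    (hA0 : ∀ v, v ≠ t → v ≠ t + 1 → v + 1 ≠ t → A t v = 0)
    (hup : AltPair ι t (t + 1)) (hdn : 2 ≤ t → AltPair ι t (t - 1) ∧ A t (t - 1) = -1)
    (hcoef : ∀ (σ M : ℤ) (e : ℕ), 1 ≤ M → 1 ≤ e → e ≤ 2 * n →
      box σ e (occPos ι t M.toNat) =
        (if e = t ∧ σ + PABC ι n t = M then 1 else 0)
        - (if e = t + 1 ∧ σ + PABC ι n t + 1 = M then 1 else 0)
        + (if e = 2 * n - t ∧ σ + PABC ι n t + (n - t : ℕ) = M then 1 else 0)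
        - (if e = 2 * n + 1 - t ∧ σ + PABC ι n t + (n - t : ℕ) + 1 = M then 1 else 0))
    (hbox : ∀ σ : ℤ, box σ (t + 1) - box σ t =
      -(xsj ι n (σ + (PABC ι n t : ℤ)) t + xsj ι n (σ + (PABC ι n t : ℤ) + 1) t
      + (A t (t + 1) : ℚ) • xsj ι n (σ + (PABC ι n (t + 1) : ℤ)) (t + 1)
      - xsj ι n (σ + (PABC ι n (t - 1) : ℤ) + 1) (t - 1)))
    (i : ℕ) (hi1 : 1 ≤ i) (hik : i ≤ k) (hjt : jf i = t) (hjn : i < k → jf (i + 1) ≠ t + 1)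
    (M' : ℤ) (hM' : M' = s + (k : ℤ) - (i : ℤ) + (PABC ι n t : ℤ))
    (c : ℚ) (hc : c = tab box s k jf (occPos ι t M'.toNat)) :
          1 ≤ M' ∧
          (c = 0 ∨ c = 1 ∨ c = 2) ∧
          (c = 0 ↔
            ((i + (n - t) + 1 ≤ k ∧ jf (i + (n - t) + 1) = 2 * n + 1 - t) ∧
             ¬(i + (n - t) ≤ k ∧ jf (i + (n - t)) = 2 * n - t))) ∧
          (c = 2 ↔
            (¬(i + (n - t) + 1 ≤ k ∧ jf (i + (n - t) + 1) = 2 * n + 1 - t) ∧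
             (i + (n - t) ≤ k ∧ jf (i + (n - t)) = 2 * n - t))) ∧
          (c = 1 →
            Ssj A ι M'.toNat t (tab box s k jf) =
              tab box s k (Function.update jf i (t + 1))) := by
  have hit := le_entry jf k (fun l a b => (hr l a b).1) hinc i hi1 hik
  rw [hjt] at hit
  have hM : 1 ≤ M' := by
    have p1 := (PABC_diff n ι i hi1 (k - i) (by omega)).2
    have p2 := (PABC_diff n ι i hi1 (t - i) (by omega)).1
    rw [show i + (k - i) = k by omega] at p1
    rw [show i + (t - i) = t by omega] at p2
    omega
  have hval : c = 1 + (if i + (n - t) ≤ k ∧ jf (i + (n - t)) = 2 * n - t then 1 else 0)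
      - (if i + (n - t) + 1 ≤ k ∧ jf (i + (n - t) + 1) = 2 * n + 1 - t then 1 else 0) := by
    rw [hc]
    unfold tab
    rw [Finset.sum_apply]
    have step : ∀ l ∈ Finset.Icc 1 k, box (s + k - l) (jf l) (occPos ι t M'.toNat) =
        (if jf l = t ∧ l = i then 1 else 0)
        - (if jf l = t + 1 ∧ l = i + 1 then 1 else 0)
        + (if jf l = 2 * n - t ∧ l = i + (n - t) then 1 else 0)
        - (if jf l = 2 * n + 1 - t ∧ l = i + (n - t) + 1 then 1 else 0) := by
      intro l hl
      rw [Finset.mem_Icc] at hl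
      rw [hcoef _ _ _ hM (hr l hl.1 hl.2).1 (hr l hl.1 hl.2).2]
      have r1 : s + k - l + PABC ι n t = M' ↔ l = i := by omega
      have r2 : s + k - l + PABC ι n t + 1 = M' ↔ l = i + 1 := by omega
      have r3 : s + k - l + PABC ι n t + (n - t : ℕ) = M' ↔ l = i + (n - t) := by omega
      have r4 : s + k - l + PABC ι n t + (n - t : ℕ) + 1 = M' ↔ l = i + (n - t) + 1 := by omega
      simp only [r1, r2, r3, r4]
    rw [Finset.sum_congr rfl step, Finset.sum_sub_distrib, Finset.sum_add_distrib,
      Finset.sum_sub_distrib, sum_ind k i hi1 (fun l => jf l = t),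
      sum_ind k (i + 1) (by omega) (fun l => jf l = t + 1),
      sum_ind k (i + (n - t)) (by omega) (fun l => jf l = 2 * n - t),
      sum_ind k (i + (n - t) + 1) (by omega) (fun l => jf l = 2 * n + 1 - t)]
    rw [if_pos ⟨hik, hjt⟩, if_neg (by rintro ⟨a, b⟩; exact hjn (by omega) b), sub_zero]
  refine ⟨hM, ?_, ?_, ?_, ?_⟩
  · rw [hval]; split_ifs <;> norm_num
  · rw [hval]; split_ifs with h1 h2 h2
    · exact iff_of_false (by norm_num) fun h => h.2 h1
    · exact iff_of_false (by norm_num) fun h => h.2 h1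
    · exact iff_of_true (by norm_num) ⟨h2, h1⟩
    · exact iff_of_false (by norm_num) fun h => h2 h.1
  · rw [hval]; split_ifs with h1 h2 h2
    · exact iff_of_false (by norm_num) fun h => h.1 h2
    · exact iff_of_true (by norm_num) ⟨h2, h1⟩
    · exact iff_of_false (by norm_num) fun h => h1 h.2
    · exact iff_of_false (by norm_num) fun h => h1 h.2
  · intro h
    rw [tab_update box s k jf i (t + 1) hi1 hik, hjt, hbox]
    unfold Ssj Sop
    rw [← hc, h, if_pos one_pos, one_smul]
    have hb := beta_occ n ι hadm A t ht1 ht2 hA0 hup hdn (s + k - i) (by omega)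
    rw [hM', hb, sub_eq_add_neg]

theorem hcoefB (n : ℕ) (ι : ℕ → ℕ) (hadm : Admissible n ι) (t : ℕ) (ht1 : 1 ≤ t) (ht2 : t + 1 ≤ n)
    (σ M : ℤ) (e : ℕ) (hM : 1 ≤ M) (he1 : 1 ≤ e) (he2 : e ≤ 2 * n) :
      boxB ι n σ e (occPos ι t M.toNat) =
        (if e = t ∧ σ + PABC ι n t = M then 1 else 0)
        - (if e = t + 1 ∧ σ + PABC ι n t + 1 = M then 1 else 0)
        + (if e = 2 * n - t ∧ σ + PABC ι n t + (n - t : ℕ) = M then 1 else 0)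
        - (if e = 2 * n + 1 - t ∧ σ + PABC ι n t + (n - t : ℕ) + 1 = M then 1 else 0) := by
  unfold boxB
  by_cases h : e ≤ n
  · rw [if_pos h, Pi.sub_apply, xsj_eval n ι hadm _ _ t ht1 (by omega) M hM,
      xsj_eval n ι hadm _ _ t ht1 (by omega) M hM,
      if_neg (c := e = 2 * n - t ∧ _) (by omega),
      if_neg (c := e = 2 * n + 1 - t ∧ _) (by omega), add_zero, sub_zero]
    congr 2
    · apply propext
      constructor <;> rintro ⟨rfl, b⟩ <;> exact ⟨rfl, b⟩
    · apply propext
      constructor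
      · rintro ⟨rfl, b⟩; exact ⟨by omega, b⟩
      · rintro ⟨rfl, b⟩; exact ⟨by omega, b⟩
  · rw [if_neg h, Pi.sub_apply, xsj_eval n ι hadm _ _ t ht1 (by omega) M hM,
      xsj_eval n ι hadm _ _ t ht1 (by omega) M hM,
      if_neg (c := e = t ∧ _) (by omega),
      if_neg (c := e = t + 1 ∧ _) (by omega), sub_zero, zero_add]
    congr 2
    · apply propext
      constructor
      · rintro ⟨rfl, b⟩; exact ⟨by omega, by omega⟩
      · rintro ⟨rfl, b⟩
        have : 2 * n - (2 * n - t) = t := by omega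
        exact ⟨this, by rw [this]; omega⟩
    · apply propext
      constructor
      · rintro ⟨rfl, b⟩; exact ⟨by omega, by omega⟩
      · rintro ⟨rfl, b⟩
        have : 2 * n + 1 - (2 * n + 1 - t) = t := by omega
        exact ⟨this, by rw [this]; omega⟩

theorem boxC_eval (n : ℕ) (hn : 2 ≤ n) (ι : ℕ → ℕ) (hadm : Admissible n ι) (t : ℕ) (ht1 : 1 ≤ t)
    (ht2 : t + 1 ≤ n) (σ M : ℤ) (e : ℕ) (hM : 1 ≤ M) (he1 : 1 ≤ e) :
      boxC ι n σ e (occPos ι t M.toNat) = boxB ι n σ e (occPos ι t M.toNat) := by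
  have z : ∀ S : ℤ, xsj ι n S n (occPos ι t M.toNat) = 0 := by
    intro S
    rw [xsj_eval n ι hadm _ _ t ht1 (by omega) M hM, if_neg (by omega)]
  unfold boxC boxB
  rw [if_neg (by omega)]
  by_cases h1 : e < n
  · rw [if_pos h1, if_pos h1.le]
  · rw [if_neg h1]
    by_cases h2 : e = n
    · subst h2
      rw [if_pos rfl, if_pos le_rfl]
      simp [z]
    · rw [if_neg h2, if_neg (c := e ≤ n) (by omega)]
      by_cases h3 : e = n + 1
      · subst h3
        rw [if_pos rfl, show 2 * n - (n + 1) = n - 1 by omega,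
          show 2 * n + 1 - (n + 1) = n by omega]
        simp only [Pi.sub_apply, Pi.smul_apply, z, smul_zero]
        congr 2
        omega
      · rw [if_neg h3]

/-- Lemma 5.2 (types B and C): behaviour of the coefficient of `x_{M',t}` in a tableau
`T = [j_1,…,j_k]^X_s` having an entry `j_i = t` with `j_{i+1} ≠ t+1`, where
`M' = s+k-i+P(t)`.  Barred entries `ovl(t)`, `ovl(t+1)` are encoded as `2n+1-t`, `2n-t`.
Out-of-range conditions `j_l = t` are regarded as violated.  The coefficient of
`x_{M',t}` in `T` is the value of `T` at the position of the `M'`-th occurrence of `t`. -/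
theorem coeff_unbarred_BC (n : ℕ) (hn : 2 ≤ n) (ι : ℕ → ℕ) (hadm : Admissible n ι) :
    (Adapted n (cartanB n) ι →
      ∀ (k : ℕ) (s : ℤ) (jf : ℕ → ℕ),
        1 ≤ k → k ≤ n →
        (∀ i, 1 ≤ i → i ≤ k → 1 ≤ jf i ∧ jf i ≤ 2 * n) →
        (∀ i, 1 ≤ i → i < k → jf i < jf (i + 1)) →
        (k = n → ∀ l m, 1 ≤ l → l < m → m ≤ k → absJ n (jf l) ≠ absJ n (jf m)) →
        1 - (PABC ι n k : ℤ) ≤ s →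
        ∀ t, 1 ≤ t → t ≤ n - 1 →
        ∀ i, 1 ≤ i → i ≤ k → jf i = t → (i < k → jf (i + 1) ≠ t + 1) →
        ∀ M' : ℤ, M' = s + (k : ℤ) - (i : ℤ) + (PABC ι n t : ℤ) →
        ∀ c : ℚ, c = tab (boxB ι n) s k jf (occPos ι t M'.toNat) →
          1 ≤ M' ∧
          (c = 0 ∨ c = 1 ∨ c = 2) ∧
          (c = 0 ↔
            ((i + (n - t) + 1 ≤ k ∧ jf (i + (n - t) + 1) = 2 * n + 1 - t) ∧
             ¬(i + (n - t) ≤ k ∧ jf (i + (n - t)) = 2 * n - t))) ∧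
          (c = 2 ↔
            (¬(i + (n - t) + 1 ≤ k ∧ jf (i + (n - t) + 1) = 2 * n + 1 - t) ∧
             (i + (n - t) ≤ k ∧ jf (i + (n - t)) = 2 * n - t))) ∧
          (c = 1 →
            Ssj (cartanB n) ι M'.toNat t (tab (boxB ι n) s k jf) =
              tab (boxB ι n) s k (Function.update jf i (t + 1)))) ∧
    (Adapted n (cartanC n) ι →
      ∀ (k : ℕ) (s : ℤ) (jf : ℕ → ℕ),
        TabCcond ι n k s jf →
        ∀ t, 1 ≤ t → t ≤ n - 1 →
        ∀ i, 1 ≤ i → i ≤ k → jf i = t → (i < k → jf (i + 1) ≠ t + 1) →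
        ∀ M' : ℤ, M' = s + (k : ℤ) - (i : ℤ) + (PABC ι n t : ℤ) →
        ∀ c : ℚ, c = tab (boxC ι n) s k jf (occPos ι t M'.toNat) →
          1 ≤ M' ∧
          (c = 0 ∨ c = 1 ∨ c = 2) ∧
          (c = 0 ↔
            ((i + (n - t) + 1 ≤ k ∧ jf (i + (n - t) + 1) = 2 * n + 1 - t) ∧
             ¬(i + (n - t) ≤ k ∧ jf (i + (n - t)) = 2 * n - t))) ∧
          (c = 2 ↔
            (¬(i + (n - t) + 1 ≤ k ∧ jf (i + (n - t) + 1) = 2 * n + 1 - t) ∧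
             (i + (n - t) ≤ k ∧ jf (i + (n - t)) = 2 * n - t))) ∧
          (c = 1 →
            Ssj (cartanC n) ι M'.toNat t (tab (boxC ι n) s k jf) =
              tab (boxC ι n) s k (Function.update jf i (t + 1)))) := by
  constructor
  · intro hAd k s jf hk1 hkn hr hinc _ hs t ht1 ht2 i hi1 hik hjt hjn M' hM' c hc
    refine core n ι hadm (cartanB n) (boxB ι n) k s jf hkn hr hinc hs t ht1 (by omega)
      ?_ ?_ ?_ (fun σ M e a b d => hcoefB n ι hadm t ht1 (by omega) σ M e a b d) ?_
      i hi1 hik hjt hjn M' hM' c hc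
    · intro v a b d
      unfold cartanB
      rw [if_neg (by omega), if_neg (by omega), if_neg (by omega)]
    · refine hAd t (t + 1) ht1 (by omega) (by omega) (by omega) (by omega) ?_
      unfold cartanB
      rw [if_neg (by omega), if_neg (by omega), if_pos (by omega)]
      norm_num
    · intro h
      have e : cartanB n t (t - 1) = -1 := by
        unfold cartanB
        rw [if_neg (by omega), if_neg (by omega), if_pos (by omega)]
      refine ⟨hAd t (t - 1) ht1 (by omega) (by omega) (by omega) (by omega) ?_, e⟩
      rw [e]; norm_num
    · intro σ
      have e : cartanB n t (t + 1) = -1 := by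
        unfold cartanB
        rw [if_neg (by omega), if_neg (by omega), if_pos (by omega)]
      unfold boxB
      rw [if_pos (by omega), if_pos (by omega), e, Nat.add_sub_cancel]
      push_cast
      module
  · intro hAd k s jf hT t ht1 ht2 i hi1 hik hjt hjn M' hM' c hc
    rcases hT with ⟨hk1, hkn, hr, hinc, hs⟩ | ⟨h0, -, -, hr, -, -⟩
    swap
    · exfalso
      by_cases h : i = 1
      · subst h; omega
      · have := hr i (by omega) hik
        omega
    refine core n ι hadm (cartanC n) (boxC ι n) k s jf (by omega) hr hinc hs t ht1 (by omega)
      ?_ ?_ ?_ (fun σ M e a b d => by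
        rw [boxC_eval n hn ι hadm t ht1 (by omega) σ M e a b]
        exact hcoefB n ι hadm t ht1 (by omega) σ M e a b d) ?_
      i hi1 hik hjt hjn M' hM' c hc
    · intro v a b d
      unfold cartanC
      rw [if_neg (by omega), if_neg (by omega), if_neg (by omega)]
    · refine hAd t (t + 1) ht1 (by omega) (by omega) (by omega) (by omega) ?_
      unfold cartanC
      split_ifs <;> omega
    · intro h
      have e : cartanC n t (t - 1) = -1 := by
        unfold cartanC
        rw [if_neg (by omega), if_neg (by omega), if_pos (by omega)]
      refine ⟨hAd t (t - 1) ht1 (by omega) (by omega) (by omega) (by omega) ?_, e⟩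
      rw [e]; norm_num
    · intro σ
      unfold boxC
      rw [if_neg (by omega), if_neg (c := t = 0) (by omega), if_pos (c := t < n) (by omega)]
      by_cases h : t + 1 < n
      · have e : cartanC n t (t + 1) = -1 := by
          unfold cartanC
          rw [if_neg (by omega), if_neg (by omega), if_pos (by omega)]
        rw [if_pos h, e, Nat.add_sub_cancel]
        push_cast
        module
      · have hn1 : n = t + 1 := by omega
        subst hn1
        have e : cartanC (t + 1) t (t + 1) = -2 := by
          unfold cartanC
          rw [if_neg (by omega), if_pos (by omega)]
        rw [if_neg h, if_pos rfl, e, Nat.add_sub_cancel]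
        push_cast
        module
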